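/- Let φ ∈ (0, π/2) and, along the segment from 0 to i parametrized as z = it, define Ω_a(t) = ∫₀ᵗ F_a(is)·i ds and Ω_c(t) = ∫₀ᵗ F_c(is)·i ds for t ∈ [0,1]. Then ∫₀¹ (F_a(it)·Ω_c(t) − F_c(it)·Ω_a(t))·i dt = −4πi·log(cos φ) + 2iφ·log((1 − sin φ)/(1 + sin φ)). -/

import Mathlib

noncomputable section

/-- `p₁ = e^{iφ}` -/
def p₁ (φ : ℝ) : ℂ := Complex.exp (Complex.I * (φ : ℂ))
/-- `p₂ = -e^{-iφ}` -/
def p₂ (φ : ℝ) : ℂ := -Complex.exp (-(Complex.I * (φ : ℂ)))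
/-- `p₃ = -e^{iφ}` -/
def p₃ (φ : ℝ) : ℂ := -p₁ φ
/-- `p₄ = e^{-iφ}` -/
def p₄ (φ : ℝ) : ℂ := Complex.exp (-(Complex.I * (φ : ℂ)))

def Fa (φ : ℝ) (z : ℂ) : ℂ :=
  1 / (z - p₁ φ) - 1 / (z - p₂ φ) + 1 / (z - p₃ φ) - 1 / (z - p₄ φ)

def Fb (φ : ℝ) (z : ℂ) : ℂ :=
  1 / (z - p₁ φ) - 1 / (z - p₂ φ) - 1 / (z - p₃ φ) + 1 / (z - p₄ φ)

def Fc (φ : ℝ) (z : ℂ) : ℂ :=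
  1 / (z - p₁ φ) + 1 / (z - p₂ φ) - 1 / (z - p₃ φ) - 1 / (z - p₄ φ)

/-!
Put `P_φ(t) = cos φ / |it - e^{iφ}|²`. On the imaginary axis `F_a` equals the real function
`2 (P_{-φ} - P_φ)` and `F_c` equals `i L_φ'` with
`L_φ(t) = log |it + e^{iφ}|² - log |it - e^{iφ}|²`, so integration by parts reduces the theorem to
`∫₀¹ (P_φ - P_{-φ}) L_φ = -π log cos φ`. This is the case `ψ = φ` of an integral of
`(P_φ - P_{-φ}) L_ψ`, which vanishes at `ψ = 0` and whose `ψ`-derivative is elementary: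
`∂L_ψ/∂ψ = 2t (P_ψ + P_{-ψ})`, partial fractions in `t` reduce the product to the kernels
`P_{±φ}`, `P_{±ψ}`, and `∫₀¹ (P_φ + P_{-φ}) = π/2` for every `φ`.
-/

open MeasureTheory Set
open Real (sin cos log arctan)
open Complex (I)
open scoped Real Interval

theorem integral_mul_primitive_sub_mul_primitive {A : Type*} [NormedCommRing A]
    [NormedAlgebra ℝ A] [CompleteSpace A] {f g : ℝ → A} (hf : Continuous f) (hg : Continuous g)
    (a b : ℝ) :
    ∫ t in a..b, (f t * (∫ s in a..t, g s) - g t * (∫ s in a..t, f s)) =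
      2 * (∫ t in a..b, f t * ∫ s in a..t, g s) - (∫ t in a..b, f t) * ∫ t in a..b, g t := by
  have hasDerivAt_primitive {h : ℝ → A} (hh : Continuous h) (t : ℝ) :
      HasDerivAt (fun u ↦ ∫ s in a..u, h s) (h t) t :=
    (hh.integral_hasStrictDerivAt a t).hasDerivAt
  have continuous_primitive {h : ℝ → A} (hh : Continuous h) :
      Continuous fun u ↦ ∫ s in a..u, h s :=
    continuous_iff_continuousAt.2 fun t ↦ (hasDerivAt_primitive hh t).continuousAt
  have by_parts := intervalIntegral.integral_mul_deriv_eq_deriv_mul (a := a) (b := b)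
    (fun t _ ↦ hasDerivAt_primitive hf t) (fun t _ ↦ hasDerivAt_primitive hg t)
    (hf.intervalIntegrable a b) (hg.intervalIntegrable a b)
  simp_rw [mul_comm _ (g _)] at by_parts
  rw [intervalIntegral.integral_sub
    ((hf.fun_mul (continuous_primitive hg)).intervalIntegrable a b)
    ((hg.fun_mul (continuous_primitive hf)).intervalIntegrable a b), by_parts,
    intervalIntegral.integral_same]
  ring

theorem intervalIntegral_swap_of_continuousOn {E : Type*} [NormedAddCommGroup E]
    [NormedSpace ℝ E] {F : ℝ → ℝ → E} {a b c d : ℝ}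
    (hF : ContinuousOn F.uncurry ([[a, b]] ×ˢ [[c, d]])) :
    ∫ x in a..b, ∫ y in c..d, F x y = ∫ y in c..d, ∫ x in a..b, F x y :=
  intervalIntegral_intervalIntegral_swap <|
    (hF.integrableOn_compact (isCompact_uIcc.prod isCompact_uIcc)).mono_set
      (prod_mono uIoc_subset_uIcc uIoc_subset_uIcc)

/-- The squared distance `|it - e^{iφ}|²` from the point `it` of the imaginary axis to the pole
`p₁ φ`. -/
def poleDistSq (φ t : ℝ) : ℝ := 1 - 2 * sin φ * t + t ^ 2

/-- The Poisson kernel of the upper half-plane for the point `sin φ + i cos φ`, multiplied by `π`;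
equivalently `-Re (1 / (it - e^{iφ}))`. -/
def halfPlanePoisson (φ t : ℝ) : ℝ := cos φ / poleDistSq φ t

/-- The conjugate Poisson kernel of the upper half-plane for the point `sin φ + i cos φ`, multiplied
by `π`; equivalently `-Im (1 / (it - e^{iφ}))`. -/
def halfPlaneConjPoisson (φ t : ℝ) : ℝ := (t - sin φ) / poleDistSq φ t

/-- The function `log |it + e^{iφ}|² - log |it - e^{iφ}|²`, a primitive of `-i F_c(it)`. -/
def logDistRatio (φ t : ℝ) : ℝ := log (poleDistSq (-φ) t) - log (poleDistSq φ t)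

theorem poleDistSq_eq (φ t : ℝ) : poleDistSq φ t = (t - sin φ) ^ 2 + cos φ ^ 2 := by
  rw [poleDistSq]
  linear_combination -Real.sin_sq_add_cos_sq φ

theorem poleDistSq_pos {φ : ℝ} (hφ : cos φ ≠ 0) (t : ℝ) : 0 < poleDistSq φ t := by
  rw [poleDistSq_eq]
  positivity

theorem poleDistSq_neg_pos {φ : ℝ} (hφ : cos φ ≠ 0) (t : ℝ) : 0 < poleDistSq (-φ) t :=
  poleDistSq_pos (by rwa [Real.cos_neg]) t

section PolesOnTheImaginaryAxis

theorem p₁_eq (φ : ℝ) : p₁ φ = cos φ + I * sin φ := by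
  rw [p₁, mul_comm, Complex.exp_mul_I, Complex.ofReal_cos, Complex.ofReal_sin, mul_comm I]

theorem p₁_add_pi (φ : ℝ) : p₁ (φ + π) = -p₁ φ := by
  rw [p₁_eq, p₁_eq, Real.cos_add_pi, Real.sin_add_pi]
  push_cast
  ring

theorem p₃_eq_p₁ (φ : ℝ) : p₃ φ = p₁ (φ + π) := (p₁_add_pi φ).symm

theorem p₄_eq_p₁ (φ : ℝ) : p₄ φ = p₁ (-φ) := by
  rw [p₄, p₁, Complex.ofReal_neg, mul_neg]

theorem p₂_eq_p₁ (φ : ℝ) : p₂ φ = p₁ (-φ + π) := by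
  rw [p₁_add_pi, ← p₄_eq_p₁, p₂, p₄]

theorem normSq_I_mul_sub_p₁ (φ t : ℝ) : Complex.normSq (I * t - p₁ φ) = poleDistSq φ t := by
  have hsub : I * t - p₁ φ = (-cos φ : ℝ) + (t - sin φ : ℝ) * I := by
    rw [p₁_eq]
    push_cast
    ring
  rw [hsub, Complex.normSq_add_mul_I, poleDistSq_eq, neg_sq, add_comm]

theorem one_div_I_mul_sub_p₁ (φ t : ℝ) :
    1 / (I * t - p₁ φ) = -(halfPlanePoisson φ t + I * halfPlaneConjPoisson φ t) := by
  rw [one_div, Complex.inv_def, normSq_I_mul_sub_p₁, p₁_eq, halfPlanePoisson, halfPlaneConjPoisson]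
  simp only [map_sub, map_add, map_mul, Complex.conj_I, Complex.conj_ofReal]
  push_cast
  ring

theorem Fa_I_mul (φ t : ℝ) :
    Fa φ (I * t) = ((2 * (halfPlanePoisson (-φ) t - halfPlanePoisson φ t) : ℝ) : ℂ) := by
  rw [Fa, p₂_eq_p₁, p₃_eq_p₁, p₄_eq_p₁]
  simp only [one_div_I_mul_sub_p₁, halfPlanePoisson, halfPlaneConjPoisson, poleDistSq,
    Real.cos_add_pi, Real.sin_add_pi, Real.cos_neg, Real.sin_neg]
  push_cast
  ring

theorem Fc_I_mul (φ t : ℝ) :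
    Fc φ (I * t) =
      I * ((2 * (halfPlaneConjPoisson (-φ) t - halfPlaneConjPoisson φ t) : ℝ) : ℂ) := by
  rw [Fc, p₂_eq_p₁, p₃_eq_p₁, p₄_eq_p₁]
  simp only [one_div_I_mul_sub_p₁, halfPlanePoisson, halfPlaneConjPoisson, poleDistSq,
    Real.cos_add_pi, Real.sin_add_pi, Real.cos_neg, Real.sin_neg]
  push_cast
  ring

end PolesOnTheImaginaryAxis

section Primitives

theorem continuousOn_halfPlanePoisson_comp {X : Type*} [TopologicalSpace X] {S : Set X}
    {f g : X → ℝ} (hf : ContinuousOn f S) (hg : ContinuousOn g S) (hcos : ∀ x ∈ S, cos (f x) ≠ 0) :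
    ContinuousOn (fun x ↦ halfPlanePoisson (f x) (g x)) S := by
  refine ContinuousOn.div (by fun_prop) ?_ fun x hx ↦ (poleDistSq_pos (hcos x hx) (g x)).ne'
  simp only [poleDistSq]
  fun_prop

theorem continuous_halfPlanePoisson {φ : ℝ} (hφ : cos φ ≠ 0) : Continuous (halfPlanePoisson φ) :=
  continuousOn_univ.1 <|
    continuousOn_halfPlanePoisson_comp continuousOn_const continuousOn_id fun _ _ ↦ hφ

theorem continuous_halfPlaneConjPoisson {φ : ℝ} (hφ : cos φ ≠ 0) :
    Continuous (halfPlaneConjPoisson φ) := by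
  refine Continuous.div (by fun_prop) ?_ fun t ↦ (poleDistSq_pos hφ t).ne'
  unfold poleDistSq
  fun_prop

theorem hasDerivAt_arctan_sub_sin_div_cos {φ : ℝ} (hφ : cos φ ≠ 0) (t : ℝ) :
    HasDerivAt (fun u ↦ arctan ((u - sin φ) / cos φ)) (halfPlanePoisson φ t) t := by
  refine (((hasDerivAt_id t).sub_const (sin φ)).div_const (cos φ)).arctan.congr_deriv ?_
  have hpos := poleDistSq_pos hφ t
  rw [poleDistSq_eq] at hpos
  rw [halfPlanePoisson, poleDistSq_eq]
  simp only [id]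
  field_simp
  ring

theorem integral_halfPlanePoisson {φ : ℝ} (hφ : φ ∈ Ioo (-(π / 2)) (π / 2)) (t : ℝ) :
    ∫ u in (0:ℝ)..t, halfPlanePoisson φ u = arctan ((t - sin φ) / cos φ) + φ := by
  have hcos : cos φ ≠ 0 := (Real.cos_pos_of_mem_Ioo hφ).ne'
  rw [intervalIntegral.integral_eq_sub_of_hasDerivAt
    (fun u _ ↦ hasDerivAt_arctan_sub_sin_div_cos hcos u)
    ((continuous_halfPlanePoisson hcos).intervalIntegrable 0 t),
    zero_sub, neg_div, Real.arctan_neg, ← Real.tan_eq_sin_div_cos, Real.arctan_tan hφ.1 hφ.2,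
    sub_neg_eq_add]

theorem arctan_one_sub_sin_div_cos {φ : ℝ} (hφ : φ ∈ Ioo (-(π / 2)) (π / 2)) :
    arctan ((1 - sin φ) / cos φ) = π / 4 - φ / 2 := by
  obtain ⟨hlo, hhi⟩ := hφ
  set x := π / 4 - φ / 2 with hx
  have hφx : φ = π / 2 - 2 * x := by rw [hx]; ring
  have hcos : 0 < cos x := Real.cos_pos_of_mem_Ioo ⟨by linarith, by linarith⟩
  have hsin : 0 < sin x := Real.sin_pos_of_pos_of_lt_pi (by linarith) (by linarith)
  refine Real.arctan_eq_of_tan_eq ?_ ⟨by linarith, by linarith⟩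
  rw [hφx, Real.sin_pi_div_two_sub, Real.cos_pi_div_two_sub, Real.cos_two_mul', Real.sin_two_mul,
    Real.tan_eq_sin_div_cos]
  field_simp
  linear_combination Real.sin_sq_add_cos_sq x

theorem integral_zero_one_halfPlanePoisson {φ : ℝ} (hφ : φ ∈ Ioo (-(π / 2)) (π / 2)) :
    ∫ t in (0:ℝ)..1, halfPlanePoisson φ t = π / 4 + φ / 2 := by
  rw [integral_halfPlanePoisson hφ, arctan_one_sub_sin_div_cos hφ]
  ring

theorem integral_zero_one_halfPlanePoisson_add_neg {φ : ℝ} (hφ : φ ∈ Ioo (-(π / 2)) (π / 2)) :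
    ∫ t in (0:ℝ)..1, (halfPlanePoisson φ t + halfPlanePoisson (-φ) t) = π / 2 := by
  have hcos : cos φ ≠ 0 := (Real.cos_pos_of_mem_Ioo hφ).ne'
  rw [intervalIntegral.integral_add
      ((continuous_halfPlanePoisson hcos).intervalIntegrable 0 1)
      ((continuous_halfPlanePoisson (by rwa [Real.cos_neg])).intervalIntegrable 0 1),
    integral_zero_one_halfPlanePoisson hφ,
    integral_zero_one_halfPlanePoisson ⟨by linarith [hφ.2], by linarith [hφ.1]⟩]
  ring

theorem hasDerivAt_log_poleDistSq {φ : ℝ} (hφ : cos φ ≠ 0) (t : ℝ) :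
    HasDerivAt (fun u ↦ log (poleDistSq φ u)) (2 * halfPlaneConjPoisson φ t) t := by
  have hasDerivAt_poleDistSq : HasDerivAt (poleDistSq φ) (2 * (t - sin φ)) t :=
    ((((hasDerivAt_id t).const_mul (2 * sin φ)).const_sub 1).add
      (hasDerivAt_pow 2 t)).congr_deriv (by push_cast; ring)
  exact (hasDerivAt_poleDistSq.log (poleDistSq_pos hφ t).ne').congr_deriv (mul_div_assoc ..)

theorem hasDerivAt_logDistRatio {φ : ℝ} (hφ : cos φ ≠ 0) (t : ℝ) :
    HasDerivAt (logDistRatio φ)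
      (2 * (halfPlaneConjPoisson (-φ) t - halfPlaneConjPoisson φ t)) t := by
  rw [mul_sub]
  exact (hasDerivAt_log_poleDistSq (by rwa [Real.cos_neg]) t).sub (hasDerivAt_log_poleDistSq hφ t)

theorem logDistRatio_apply_zero (φ : ℝ) : logDistRatio φ 0 = 0 := by
  simp [logDistRatio, poleDistSq]

theorem logDistRatio_apply_one {φ : ℝ} (hφ : cos φ ≠ 0) :
    logDistRatio φ 1 = -log ((1 - sin φ) / (1 + sin φ)) := by
  have hneg : poleDistSq (-φ) 1 = 2 * (1 + sin φ) := by rw [poleDistSq, Real.sin_neg]; ring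
  have hpos : poleDistSq φ 1 = 2 * (1 - sin φ) := by rw [poleDistSq]; ring
  rw [logDistRatio, ← Real.log_div (poleDistSq_neg_pos hφ 1).ne' (poleDistSq_pos hφ 1).ne', hneg,
    hpos, mul_div_mul_left _ _ two_ne_zero, ← Real.log_inv, inv_div]

end Primitives

section VariationOfTheAngle

theorem hasDerivAt_logDistRatio_angle {ψ : ℝ} (hψ : cos ψ ≠ 0) (t : ℝ) :
    HasDerivAt (fun θ ↦ logDistRatio θ t)
      (2 * t * (halfPlanePoisson ψ t + halfPlanePoisson (-ψ) t)) ψ := by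
  have hasDerivAt_dist : HasDerivAt (fun θ ↦ poleDistSq θ t) (-(2 * cos ψ * t)) ψ :=
    ((((Real.hasDerivAt_sin ψ).const_mul 2).mul_const t).const_sub 1).add_const (t ^ 2)
  have hasDerivAt_dist_neg : HasDerivAt (fun θ ↦ poleDistSq (-θ) t) (2 * cos ψ * t) ψ := by
    simp only [poleDistSq, Real.sin_neg, mul_neg, neg_mul, sub_neg_eq_add]
    exact ((((Real.hasDerivAt_sin ψ).const_mul 2).mul_const t).const_add 1).add_const (t ^ 2)
  refine ((hasDerivAt_dist_neg.log (poleDistSq_neg_pos hψ t).ne').sub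
    (hasDerivAt_dist.log (poleDistSq_pos hψ t).ne')).congr_deriv ?_
  rw [halfPlanePoisson, halfPlanePoisson, Real.cos_neg]
  ring

theorem uIcc_zero_subset_Ioo_pi_div_two {ψ : ℝ} (hψ : ψ ∈ Ioo (-(π / 2)) (π / 2)) :
    [[0, ψ]] ⊆ Ioo (-(π / 2)) (π / 2) :=
  ordConnected_Ioo.uIcc_subset ⟨by linarith [Real.pi_pos], by linarith [Real.pi_pos]⟩ hψ

theorem continuousOn_halfPlanePoisson_add_comp {X : Type*} [TopologicalSpace X] {S : Set X}
    {f g : X → ℝ} (hf : ContinuousOn f S) (hg : ContinuousOn g S) (hcos : ∀ x ∈ S, cos (f x) ≠ 0) :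
    ContinuousOn (fun x ↦ halfPlanePoisson (f x) (g x) + halfPlanePoisson (-f x) (g x)) S :=
  (continuousOn_halfPlanePoisson_comp hf hg hcos).add
    (continuousOn_halfPlanePoisson_comp hf.neg hg fun x hx ↦ by rw [Real.cos_neg]; exact hcos x hx)

theorem integral_angle_halfPlanePoisson_add {ψ : ℝ} (hψ : ψ ∈ Ioo (-(π / 2)) (π / 2)) (t : ℝ) :
    ∫ θ in (0:ℝ)..ψ, 2 * t * (halfPlanePoisson θ t + halfPlanePoisson (-θ) t) =
      logDistRatio ψ t := by
  have hcos (θ : ℝ) (hθ : θ ∈ [[0, ψ]]) : cos θ ≠ 0 :=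
    (Real.cos_pos_of_mem_Ioo (uIcc_zero_subset_Ioo_pi_div_two hψ hθ)).ne'
  have hcont : ContinuousOn
      (fun θ ↦ 2 * t * (halfPlanePoisson θ t + halfPlanePoisson (-θ) t)) [[0, ψ]] :=
    continuousOn_const.mul
      (continuousOn_halfPlanePoisson_add_comp continuousOn_id continuousOn_const hcos)
  rw [intervalIntegral.integral_eq_sub_of_hasDerivAt
    (fun θ hθ ↦ hasDerivAt_logDistRatio_angle (hcos θ hθ) t) hcont.intervalIntegrable]
  simp [logDistRatio]

theorem halfPlanePoisson_partial_fractions {φ θ : ℝ} (hφ : cos φ ≠ 0) (hθ : cos θ ≠ 0)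
    (hne : cos θ ^ 2 - cos φ ^ 2 ≠ 0) (t : ℝ) :
    (halfPlanePoisson φ t - halfPlanePoisson (-φ) t) *
        (2 * t * (halfPlanePoisson θ t + halfPlanePoisson (-θ) t)) =
      2 * sin φ / (cos θ ^ 2 - cos φ ^ 2) *
        (cos θ * (halfPlanePoisson φ t + halfPlanePoisson (-φ) t) -
          cos φ * (halfPlanePoisson θ t + halfPlanePoisson (-θ) t)) := by
  have hdistφ := (poleDistSq_pos hφ t).ne'
  have hdistφ_neg := (poleDistSq_neg_pos hφ t).ne'
  have hdistθ := (poleDistSq_pos hθ t).ne'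
  have hdistθ_neg := (poleDistSq_neg_pos hθ t).ne'
  simp only [halfPlanePoisson, Real.cos_neg]
  field_simp
  simp only [poleDistSq, Real.sin_neg]
  have hsub : cos θ ^ 2 - cos φ ^ 2 = sin φ ^ 2 - sin θ ^ 2 := by
    linear_combination Real.sin_sq_add_cos_sq θ - Real.sin_sq_add_cos_sq φ
  rw [hsub]
  ring

theorem integral_halfPlanePoisson_sub_mul_add {φ θ : ℝ} (hφ : φ ∈ Ioo (-(π / 2)) (π / 2))
    (hθ : θ ∈ Ioo (-(π / 2)) (π / 2)) (hne : cos θ ≠ cos φ) :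
    ∫ t in (0:ℝ)..1, (halfPlanePoisson φ t - halfPlanePoisson (-φ) t) *
        (2 * t * (halfPlanePoisson θ t + halfPlanePoisson (-θ) t)) =
      π * (sin φ / (cos φ + cos θ)) := by
  have integrable {α : ℝ} (hα : cos α ≠ 0) : IntervalIntegrable
      (fun t ↦ halfPlanePoisson α t + halfPlanePoisson (-α) t) volume 0 1 :=
    ((continuous_halfPlanePoisson hα).add
      (continuous_halfPlanePoisson (by rwa [Real.cos_neg]))).intervalIntegrable 0 1
  have hcφ := Real.cos_pos_of_mem_Ioo hφ
  have hcθ := Real.cos_pos_of_mem_Ioo hθ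
  have hsum : cos φ + cos θ ≠ 0 := by positivity
  have hdiff : cos θ - cos φ ≠ 0 := sub_ne_zero.2 hne
  have hsq : cos θ ^ 2 - cos φ ^ 2 = (cos φ + cos θ) * (cos θ - cos φ) := by ring
  simp_rw [halfPlanePoisson_partial_fractions hcφ.ne' hcθ.ne' (hsq ▸ mul_ne_zero hsum hdiff)]
  rw [intervalIntegral.integral_const_mul, intervalIntegral.integral_sub
      ((integrable hcφ.ne').const_mul _) ((integrable hcθ.ne').const_mul _),
    intervalIntegral.integral_const_mul, intervalIntegral.integral_const_mul,
    integral_zero_one_halfPlanePoisson_add_neg hφ, integral_zero_one_halfPlanePoisson_add_neg hθ,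
    hsq]
  field_simp

theorem integral_sin_div_cos_add_cos {φ ψ : ℝ} (hφ : φ ∈ Ioo (-(π / 2)) (π / 2))
    (hψ : ψ ∈ Ioo (-(π / 2)) (π / 2)) :
    ∫ θ in (0:ℝ)..ψ, sin φ / (cos φ + cos θ) =
      log (cos ((φ - ψ) / 2)) - log (cos ((φ + ψ) / 2)) := by
  have hcos {θ : ℝ} (hθ : θ ∈ [[0, ψ]]) :
      0 < cos θ ∧ 0 < cos ((φ - θ) / 2) ∧ 0 < cos ((φ + θ) / 2) := by
    obtain ⟨hφlo, hφhi⟩ := hφ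
    obtain ⟨hθlo, hθhi⟩ := uIcc_zero_subset_Ioo_pi_div_two hψ hθ
    refine ⟨Real.cos_pos_of_mem_Ioo ⟨hθlo, hθhi⟩, Real.cos_pos_of_mem_Ioo ⟨?_, ?_⟩,
      Real.cos_pos_of_mem_Ioo ⟨?_, ?_⟩⟩ <;> linarith
  have hderiv (θ : ℝ) (hθ : θ ∈ [[0, ψ]]) :
      HasDerivAt (fun θ ↦ log (cos ((φ - θ) / 2)) - log (cos ((φ + θ) / 2)))
        (sin φ / (cos φ + cos θ)) θ := by
    obtain ⟨-, hsub, hadd⟩ := hcos hθ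
    refine ((((((hasDerivAt_id θ).const_sub φ).div_const 2).cos).log hsub.ne').sub
      ((((hasDerivAt_id θ).const_add φ).div_const 2).cos.log hadd.ne')).congr_deriv ?_
    have hsin : sin φ = sin ((φ - θ) / 2 + (φ + θ) / 2) := by ring_nf
    rw [Real.cos_add_cos, hsin, Real.sin_add]
    simp only [id]
    field_simp
    ring
  have hcont : ContinuousOn (fun θ ↦ sin φ / (cos φ + cos θ)) [[0, ψ]] :=
    ContinuousOn.div (by fun_prop) (by fun_prop) fun θ hθ ↦
      (add_pos (Real.cos_pos_of_mem_Ioo hφ) (hcos hθ).1).ne'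
  rw [intervalIntegral.integral_eq_sub_of_hasDerivAt hderiv hcont.intervalIntegrable]
  simp

theorem eq_or_eq_neg_of_cos_eq {φ θ : ℝ} (hφ : |φ| ≤ π) (hθ : |θ| ≤ π) (h : cos θ = cos φ) :
    θ = φ ∨ θ = -φ :=
  abs_eq_abs.1 <| Real.injOn_cos ⟨abs_nonneg θ, hθ⟩ ⟨abs_nonneg φ, hφ⟩ <| by
    rwa [Real.cos_abs, Real.cos_abs]

theorem ae_cos_ne_cos {φ : ℝ} (hφ : |φ| ≤ π) : ∀ᵐ θ : ℝ, |θ| ≤ π → cos θ ≠ cos φ := by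
  filter_upwards [(toFinite {φ, -φ}).countable.ae_notMem volume] with θ hθ hθπ h
  exact hθ (eq_or_eq_neg_of_cos_eq hφ hθπ h)

theorem integral_halfPlanePoisson_sub_mul_logDistRatio {φ ψ : ℝ}
    (hφ : φ ∈ Ioo (-(π / 2)) (π / 2)) (hψ : ψ ∈ Ioo (-(π / 2)) (π / 2)) :
    ∫ t in (0:ℝ)..1, (halfPlanePoisson φ t - halfPlanePoisson (-φ) t) * logDistRatio ψ t =
      π * (log (cos ((φ - ψ) / 2)) - log (cos ((φ + ψ) / 2))) := by
  have hcos : cos φ ≠ 0 := (Real.cos_pos_of_mem_Ioo hφ).ne'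
  have abs_le_pi {θ : ℝ} (hθ : θ ∈ Ioo (-(π / 2)) (π / 2)) : |θ| ≤ π :=
    abs_le.2 ⟨by linarith [hθ.1, Real.pi_pos], by linarith [hθ.2, Real.pi_pos]⟩
  calc
    _ = ∫ t in (0:ℝ)..1, ∫ θ in (0:ℝ)..ψ, (halfPlanePoisson φ t - halfPlanePoisson (-φ) t) *
          (2 * t * (halfPlanePoisson θ t + halfPlanePoisson (-θ) t)) := by
      simp_rw [intervalIntegral.integral_const_mul, ← integral_angle_halfPlanePoisson_add hψ,
        intervalIntegral.integral_const_mul]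
    _ = ∫ θ in (0:ℝ)..ψ, ∫ t in (0:ℝ)..1, (halfPlanePoisson φ t - halfPlanePoisson (-φ) t) *
          (2 * t * (halfPlanePoisson θ t + halfPlanePoisson (-θ) t)) := by
      refine intervalIntegral_swap_of_continuousOn (ContinuousOn.mul ?_ (ContinuousOn.mul ?_ ?_))
      · exact ((continuous_halfPlanePoisson hcos).sub (continuous_halfPlanePoisson
          (by rwa [Real.cos_neg]))).comp_continuousOn continuousOn_fst
      · fun_prop
      · exact continuousOn_halfPlanePoisson_add_comp continuousOn_snd continuousOn_fst
          fun x hx ↦ (Real.cos_pos_of_mem_Ioo (uIcc_zero_subset_Ioo_pi_div_two hψ hx.2)).ne'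
    _ = ∫ θ in (0:ℝ)..ψ, π * (sin φ / (cos φ + cos θ)) := by
      refine intervalIntegral.integral_congr_ae ?_
      filter_upwards [ae_cos_ne_cos (abs_le_pi hφ)] with θ hne hθ
      have hθ' := uIcc_zero_subset_Ioo_pi_div_two hψ (uIoc_subset_uIcc hθ)
      exact integral_halfPlanePoisson_sub_mul_add hφ hθ' (hne (abs_le_pi hθ'))
    _ = _ := by
      rw [intervalIntegral.integral_const_mul, integral_sin_div_cos_add_cos hφ hψ]

end VariationOfTheAngle

section IntegralsOfTheForms

theorem continuous_Fa_I_mul {φ : ℝ} (hφ : cos φ ≠ 0) : Continuous fun t : ℝ ↦ Fa φ (I * t) := by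
  simp_rw [Fa_I_mul]
  exact Complex.continuous_ofReal.comp (((continuous_halfPlanePoisson
    (by rwa [Real.cos_neg])).sub (continuous_halfPlanePoisson hφ)).const_mul 2)

theorem continuous_Fc_I_mul {φ : ℝ} (hφ : cos φ ≠ 0) : Continuous fun t : ℝ ↦ Fc φ (I * t) := by
  simp_rw [Fc_I_mul]
  exact continuous_const.mul (Complex.continuous_ofReal.comp (((continuous_halfPlaneConjPoisson
    (by rwa [Real.cos_neg])).sub (continuous_halfPlaneConjPoisson hφ)).const_mul 2))

theorem integral_Fa_I_mul {φ : ℝ} (hφ : φ ∈ Ioo (-(π / 2)) (π / 2)) :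
    ∫ t in (0:ℝ)..1, Fa φ (I * t) = -2 * φ := by
  have hcos : cos φ ≠ 0 := (Real.cos_pos_of_mem_Ioo hφ).ne'
  simp_rw [Fa_I_mul]
  rw [intervalIntegral.integral_ofReal, intervalIntegral.integral_const_mul,
    intervalIntegral.integral_sub
      ((continuous_halfPlanePoisson (by rwa [Real.cos_neg])).intervalIntegrable 0 1)
      ((continuous_halfPlanePoisson hcos).intervalIntegrable 0 1),
    integral_zero_one_halfPlanePoisson ⟨by linarith [hφ.2], by linarith [hφ.1]⟩,
    integral_zero_one_halfPlanePoisson hφ]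
  push_cast
  ring

theorem integral_Fc_I_mul {φ : ℝ} (hφ : cos φ ≠ 0) (t : ℝ) :
    ∫ s in (0:ℝ)..t, Fc φ (I * s) = I * logDistRatio φ t := by
  have hcont : Continuous fun s ↦
      2 * (halfPlaneConjPoisson (-φ) s - halfPlaneConjPoisson φ s) :=
    ((continuous_halfPlaneConjPoisson (by rwa [Real.cos_neg])).sub
      (continuous_halfPlaneConjPoisson hφ)).const_mul 2
  simp_rw [Fc_I_mul]
  rw [intervalIntegral.integral_const_mul, intervalIntegral.integral_ofReal,
    intervalIntegral.integral_eq_sub_of_hasDerivAt (fun s _ ↦ hasDerivAt_logDistRatio hφ s)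
      (hcont.intervalIntegrable 0 t), logDistRatio_apply_zero, sub_zero]

theorem integral_Fa_I_mul_mul_logDistRatio {φ : ℝ} (hφ : φ ∈ Ioo (-(π / 2)) (π / 2)) :
    ∫ t in (0:ℝ)..1, Fa φ (I * t) * (I * logDistRatio φ t) = 2 * π * I * log (cos φ) := by
  have hFa (t : ℝ) : Fa φ (I * t) * (I * logDistRatio φ t) = -2 * I *
      (((halfPlanePoisson φ t - halfPlanePoisson (-φ) t) * logDistRatio φ t : ℝ) : ℂ) := by
    rw [Fa_I_mul]
    push_cast
    ring
  simp_rw [hFa]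
  rw [intervalIntegral.integral_const_mul, intervalIntegral.integral_ofReal,
    integral_halfPlanePoisson_sub_mul_logDistRatio hφ hφ, sub_self, zero_div, Real.cos_zero,
    Real.log_one, add_self_div_two]
  push_cast
  ring

end IntegralsOfTheForms

theorem stmt_9_general (φ : ℝ) (hφ : φ ∈ Ioo (-(π / 2)) (π / 2)) :
    (∫ t in (0:ℝ)..1,
        (Fa φ (I * t) * (∫ s in (0:ℝ)..t, Fc φ (I * s) * I) -
          Fc φ (I * t) * (∫ s in (0:ℝ)..t, Fa φ (I * s) * I)) * I) =
      -4 * π * I * (log (cos φ) : ℝ) +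
        2 * I * φ * (log ((1 - sin φ) / (1 + sin φ)) : ℝ) := by
  have hcos : cos φ ≠ 0 := (Real.cos_pos_of_mem_Ioo hφ).ne'
  calc
    _ = ∫ t in (0:ℝ)..1, -(Fa φ (I * t) * (∫ s in (0:ℝ)..t, Fc φ (I * s)) -
          Fc φ (I * t) * ∫ s in (0:ℝ)..t, Fa φ (I * s)) := by
      refine intervalIntegral.integral_congr fun t _ ↦ ?_
      simp only [intervalIntegral.integral_mul_const]
      linear_combination (Fa φ (I * t) * (∫ s in (0:ℝ)..t, Fc φ (I * s)) -
        Fc φ (I * t) * ∫ s in (0:ℝ)..t, Fa φ (I * s)) * Complex.I_mul_I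
    _ = -(2 * (∫ t in (0:ℝ)..1, Fa φ (I * t) * ∫ s in (0:ℝ)..t, Fc φ (I * s)) -
          (∫ t in (0:ℝ)..1, Fa φ (I * t)) * ∫ t in (0:ℝ)..1, Fc φ (I * t)) := by
      rw [intervalIntegral.integral_neg, integral_mul_primitive_sub_mul_primitive
        (continuous_Fa_I_mul hcos) (continuous_Fc_I_mul hcos)]
    _ = -(2 * (2 * π * I * log (cos φ)) - -2 * φ * (I * logDistRatio φ 1)) := by
      simp_rw [integral_Fc_I_mul hcos]
      rw [integral_Fa_I_mul_mul_logDistRatio hφ, integral_Fa_I_mul hφ]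
    _ = _ := by
      rw [logDistRatio_apply_one hcos]
      push_cast
      ring

/- STATEMENT 9: along the segment from `0` to `i` parametrized as `z = it`, with
`Ω_a(t) = ∫₀ᵗ F_a(is)·i ds` and `Ω_c(t) = ∫₀ᵗ F_c(is)·i ds`,
`∫₀¹ (F_a(it) Ω_c(t) - F_c(it) Ω_a(t))·i dt
  = -4πi log(cos φ) + 2iφ log((1-sin φ)/(1+sin φ))`. -/
theorem stmt_9 (φ : ℝ) (hφ : φ ∈ Set.Ioo 0 (Real.pi / 2)) :
    (∫ t in (0:ℝ)..1,
        (Fa φ (Complex.I * (t : ℂ)) *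
            (∫ s in (0:ℝ)..t, Fc φ (Complex.I * (s : ℂ)) * Complex.I) -
          Fc φ (Complex.I * (t : ℂ)) *
            (∫ s in (0:ℝ)..t, Fa φ (Complex.I * (s : ℂ)) * Complex.I)) * Complex.I) =
      -4 * (Real.pi : ℂ) * Complex.I * ((Real.log (Real.cos φ) : ℝ) : ℂ) +
        2 * Complex.I * (φ : ℂ) *
          ((Real.log ((1 - Real.sin φ) / (1 + Real.sin φ)) : ℝ) : ℂ) := by
  exact stmt_9_general φ ⟨by linarith [hφ.1, Real.pi_pos], hφ.2⟩
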